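/- Let v : ℝ × E → ℝ be C¹. Then v(t, φ(t, X)) · det F(t, X) = v(0, X) for all (t, X) if and only if ∂v/∂t(t, x) + D_x v(t, x)(u(t, x)) + v(t, x) · (div u)(t, x) = 0 for all (t, x) (equivalently ∂v/∂t + div(v u) = 0); i.e. the 3-form v·det is moving with the fluid if and only if v satisfies the continuity equation. -/

import Mathlib

noncomputable section

local notation "E3" => EuclideanSpace ℝ (Fin 3)

/-- divergence of a vector field: trace of its Fréchet derivative. -/
def divv (w : E3 → E3) (x : E3) : ℝ :=
  LinearMap.trace ℝ E3 (fderiv ℝ w x : E3 →ₗ[ℝ] E3)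

section Flow

open Filter Topology Set MeasureTheory

variable {E : Type*} [NormedAddCommGroup E] [NormedSpace ℝ E]

/-- A Grönwall estimate whose differential inequality is only required while the curve stays in
the ball of radius `r`. -/
theorem norm_le_mul_exp_of_norm_deriv_le_of_norm_le {d d' : ℝ → E} {K C r a : ℝ} (hK : 0 ≤ K)
    (hC : 0 < C) (hd : ∀ t, HasDerivAt d (d' t) t) (h0 : ‖d 0‖ ≤ C)
    (hr : C * Real.exp ((K + 1) * a) ≤ r)
    (hb : ∀ t ∈ Icc 0 a, ‖d t‖ ≤ r → ‖d' t‖ ≤ K * ‖d t‖) :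
    ∀ t ∈ Icc 0 a, ‖d t‖ ≤ C * Real.exp ((K + 1) * a) := by
  have hmono : ∀ t ≤ a, C * Real.exp ((K + 1) * t) ≤ C * Real.exp ((K + 1) * a) := by
    intro t ht
    gcongr
  have hB : ∀ t, HasDerivAt (fun t => C * Real.exp ((K + 1) * t))
      ((K + 1) * (C * Real.exp ((K + 1) * t))) t := by
    intro t
    have := (((hasDerivAt_id t).const_mul (K + 1)).exp).const_mul C
    refine this.congr_deriv ?_
    simp only [id]
    ring
  intro t ht
  refine le_trans (image_norm_le_of_norm_deriv_right_lt_deriv_boundary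
    (fun x _ => (hd x).continuousAt.continuousWithinAt)
    (fun x _ => (hd x).hasDerivWithinAt) (by simpa using h0) hB ?_ ht) (hmono t ht.2)
  intro x hx hxB
  have hpos : 0 < C * Real.exp ((K + 1) * x) := by positivity
  have := hb x ⟨hx.1, hx.2.le⟩ (hxB.le.trans ((hmono x hx.2.le).trans hr))
  rw [hxB] at this
  linarith

/-- Two-sided version of `norm_le_mul_exp_of_norm_deriv_le_of_norm_le`. -/
theorem norm_le_mul_exp_of_norm_deriv_le_of_norm_le_of_abs_sub_le {d d' : ℝ → E}
    {K C r a t₀ : ℝ} (hK : 0 ≤ K) (hC : 0 < C) (hd : ∀ t, HasDerivAt d (d' t) t)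
    (h0 : ‖d t₀‖ ≤ C) (hr : C * Real.exp ((K + 1) * a) ≤ r)
    (hb : ∀ t, |t - t₀| ≤ a → ‖d t‖ ≤ r → ‖d' t‖ ≤ K * ‖d t‖) :
    ∀ t, |t - t₀| ≤ a → ‖d t‖ ≤ C * Real.exp ((K + 1) * a) := by
  intro t ht
  rcases le_total t₀ t with h | h
  · have := norm_le_mul_exp_of_norm_deriv_le_of_norm_le (d := fun s => d (t₀ + s))
      (d' := fun s => d' (t₀ + s)) (a := a) hK hC (fun s => (hd (t₀ + s)).comp_const_add t₀ s)
      (by simpa using h0) hr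
      (fun s hs => hb (t₀ + s) (by rw [add_sub_cancel_left, abs_of_nonneg hs.1]; exact hs.2))
      (t - t₀) ⟨by linarith, (le_abs_self _).trans ht⟩
    simpa using this
  · have := norm_le_mul_exp_of_norm_deriv_le_of_norm_le (d := fun s => d (t₀ - s))
      (d' := fun s => -d' (t₀ - s)) (a := a) hK hC (fun s => (hd (t₀ - s)).comp_const_sub t₀ s)
      (by simpa using h0) hr
      (fun s hs h => by
        rw [norm_neg]
        exact hb (t₀ - s) (by rw [sub_sub_cancel_left, abs_neg, abs_of_nonneg hs.1]; exact hs.2) h)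
      (t₀ - t) ⟨by linarith, by rw [← neg_sub]; exact (neg_le_abs _).trans ht⟩
    simpa using this

/-- The difference quotients of the velocity along nearby trajectories of a `C¹` field are bounded,
locally uniformly in time. -/
theorem exists_eventually_norm_slope_velocity_le {u φ : ℝ → E → E}
    (hu : ContDiff ℝ 1 (Function.uncurry u))
    (hφt : ∀ t X, HasDerivAt (fun τ => φ τ X) (u t (φ t X)) t)
    (hφ : ∀ t, Differentiable ℝ (φ t)) (t₀ : ℝ) (X h : E) :
    ∃ δ > 0, ∃ C, ∀ᶠ ε : ℝ in 𝓝[≠] 0, ∀ t, |t - t₀| ≤ δ →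
      ‖ε⁻¹ • (u t (φ t (X + ε • h)) - u t (φ t X))‖ ≤ C := by
  obtain ⟨K, U, hU, hKU⟩ := (hu.contDiffAt (x := (t₀, φ t₀ X))).exists_lipschitzOnWith
  obtain ⟨ρ, hρ, hρU⟩ := Metric.mem_nhds_iff.1 hU
  obtain ⟨δ₁, hδ₁, hδφ⟩ := Metric.continuousAt_iff.1 (hφt t₀ X).continuousAt (ρ / 2) (by positivity)
  set δ := min (δ₁ / 2) (ρ / 2) with hδ
  have hδ0 : 0 < δ := by positivity
  have hmem : ∀ t, |t - t₀| ≤ δ → ∀ y, ‖y - φ t X‖ ≤ ρ / 2 → (t, y) ∈ U := by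
    intro t ht y hy
    apply hρU
    have h1 : δ ≤ δ₁ / 2 := min_le_left _ _
    have h2 : δ ≤ ρ / 2 := min_le_right _ _
    have h3 := hδφ (x := t) (by rw [Real.dist_eq]; linarith)
    rw [Metric.mem_ball, Prod.dist_eq, max_lt_iff]
    refine ⟨by simp only [Real.dist_eq]; linarith, ?_⟩
    have h4 := dist_triangle y (φ t X) (φ t₀ X)
    rw [← dist_eq_norm] at hy
    simp only
    linarith
  have hlip : ∀ t, |t - t₀| ≤ δ → ∀ y, ‖y - φ t X‖ ≤ ρ / 2 →
      ‖u t y - u t (φ t X)‖ ≤ K * ‖y - φ t X‖ := by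
    intro t ht y hy
    have := hKU.dist_le_mul (t, y) (hmem t ht y hy) (t, φ t X)
      (hmem t ht _ (by simpa using by positivity))
    simpa [Prod.dist_eq, dist_eq_norm] using this
  have hq := ((hφ t₀ X).hasFDerivAt.hasLineDerivAt h).tendsto_slope_zero
  set L := ‖fderiv ℝ (φ t₀) X h‖ + 1 with hL
  have hL0 : 0 < L := by positivity
  set D := Real.exp ((K + 1) * δ) with hD
  have hD0 : 0 < D := Real.exp_pos _
  refine ⟨δ, hδ0, K * (L * D), ?_⟩
  have hsmall : ∀ᶠ ε : ℝ in 𝓝[≠] 0, L * |ε| * D ≤ ρ / 2 := by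
    have : Tendsto (fun ε : ℝ => L * |ε| * D) (𝓝[≠] 0) (𝓝 0) := by
      refine Tendsto.mono_left ?_ nhdsWithin_le_nhds
      have : Continuous (fun ε : ℝ => L * |ε| * D) := by fun_prop
      simpa using this.tendsto 0
    exact this.eventually_le_const (by positivity)
  filter_upwards [hsmall, hq.norm.eventually_le_const (lt_add_one _), self_mem_nhdsWithin]
    with ε hε hqε hε0 t ht
  have habs : 0 < |ε| := abs_pos.2 hε0
  rw [norm_smul, norm_inv, Real.norm_eq_abs, inv_mul_le_iff₀ habs] at hqε
  have hd := norm_le_mul_exp_of_norm_deriv_le_of_norm_le_of_abs_sub_le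
    (d := fun t => φ t (X + ε • h) - φ t X) (C := L * |ε|) (t₀ := t₀) K.2 (by positivity)
    (fun t => (hφt t (X + ε • h)).sub (hφt t X)) (by rw [mul_comm]; exact hqε) hε
    (fun t ht hdt => hlip t ht _ hdt) t ht
  have := (hlip t ht _ (hd.trans hε)).trans (mul_le_mul_of_nonneg_left hd K.2)
  rw [norm_smul, norm_inv, Real.norm_eq_abs, inv_mul_le_iff₀ habs]
  refine this.trans_eq ?_
  simp only [hD, NNReal.val_eq_coe]
  ring

theorem fderiv_uncurry_comp_inr {G : Type*} [NormedAddCommGroup G] [NormedSpace ℝ G]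
    {f : ℝ → E → G} (hf : Differentiable ℝ (Function.uncurry f)) (t : ℝ) (x y : E) :
    fderiv ℝ (f t) x y = fderiv ℝ (Function.uncurry f) (t, x) (0, y) := by
  have h := (hf (t, x)).hasFDerivAt.comp x (hasFDerivAt_prodMk_right t x)
  have h' : HasFDerivAt (f t) _ x := h
  rw [h'.fderiv]
  simp

variable [CompleteSpace E]

/-- The variational equation: the spatial derivative of the flow of a `C¹` time-dependent field `u`
solves the linearisation of `u` along the trajectories. -/
theorem hasDerivAt_fderiv_flow {u φ : ℝ → E → E}
    (hu : ContDiff ℝ 1 (Function.uncurry u))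
    (hφt : ∀ t X, HasDerivAt (fun τ => φ τ X) (u t (φ t X)) t)
    (hφ : ∀ t, Differentiable ℝ (φ t)) (t₀ : ℝ) (X h : E) :
    HasDerivAt (fun t => fderiv ℝ (φ t) X h)
      (fderiv ℝ (u t₀) (φ t₀ X) (fderiv ℝ (φ t₀) X h)) t₀ := by
  obtain ⟨δ, hδ, C, hC⟩ := exists_eventually_norm_slope_velocity_le hu hφt hφ t₀ X h
  have hud := hu.differentiable one_ne_zero
  have hut : ∀ t, Differentiable ℝ (u t) := fun t x =>
    ((hud (t, x)).comp x (hasFDerivAt_prodMk_right (𝕜 := ℝ) t x).differentiableAt :)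
  have hφc : ∀ Y, Continuous fun t => φ t Y := fun Y =>
    continuous_iff_continuousAt.2 fun t => (hφt t Y).continuousAt
  have huc : ∀ Y, Continuous fun t => u t (φ t Y) := fun Y =>
    hu.continuous.comp (continuous_id.prodMk (hφc Y))
  set w : ℝ → E := fun t => fderiv ℝ (φ t) X h with hw
  set w' : ℝ → E := fun t => fderiv ℝ (u t) (φ t X) (w t) with hw'
  have hq : ∀ t, Tendsto (fun ε : ℝ => ε⁻¹ • (φ t (X + ε • h) - φ t X)) (𝓝[≠] 0) (𝓝 (w t)) :=
    fun t => ((hφ t X).hasFDerivAt.hasLineDerivAt h).tendsto_slope_zero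
  have hq' : ∀ t, Tendsto (fun ε : ℝ => ε⁻¹ • (u t (φ t (X + ε • h)) - u t (φ t X)))
      (𝓝[≠] 0) (𝓝 (w' t)) := fun t =>
    (((hut t (φ t X)).hasFDerivAt.comp X (hφ t X).hasFDerivAt).hasLineDerivAt h).tendsto_slope_zero
  have hcont : ∀ ε : ℝ, Continuous fun t => ε⁻¹ • (u t (φ t (X + ε • h)) - u t (φ t X)) :=
    fun ε => ((huc _).sub (huc _)).const_smul _
  have hmeas : AEStronglyMeasurable w' volume :=
    aestronglyMeasurable_of_tendsto_ae (𝓝[≠] (0 : ℝ)) (fun ε => (hcont ε).aestronglyMeasurable)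
      (Eventually.of_forall hq')
  have hbound : ∀ t, |t - t₀| ≤ δ → ‖w' t‖ ≤ C := fun t ht =>
    le_of_tendsto (hq' t).norm (hC.mono fun ε hε => hε t ht)
  have hsub : ∀ t, |t - t₀| ≤ δ → ∀ s ∈ uIoc t₀ t, |s - t₀| ≤ δ := fun t ht s hs =>
    (abs_sub_left_of_mem_uIcc (uIoc_subset_uIcc hs)).trans ht
  have hint : ∀ t, |t - t₀| ≤ δ → ∫ s in t₀..t, w' s = w t - w t₀ := by
    intro t ht
    have h1 : Tendsto (fun ε : ℝ => ∫ s in t₀..t, ε⁻¹ • (u s (φ s (X + ε • h)) - u s (φ s X)))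
        (𝓝[≠] 0) (𝓝 (∫ s in t₀..t, w' s)) := by
      refine intervalIntegral.tendsto_integral_filter_of_dominated_convergence (fun _ => C)
        (Eventually.of_forall fun ε => (hcont ε).aestronglyMeasurable)
        (hC.mono fun ε hε => Eventually.of_forall fun s hs => hε s (hsub t ht s hs))
        intervalIntegrable_const (Eventually.of_forall fun s _ => hq' s)
    refine tendsto_nhds_unique h1 (((hq t).sub (hq t₀)).congr fun ε => ?_)
    exact (intervalIntegral.integral_eq_sub_of_hasDerivAt
      (fun s _ => ((hφt s (X + ε • h)).sub (hφt s X)).const_smul ε⁻¹)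
      ((hcont ε).intervalIntegrable _ _)).symm
  have hnear : ∀ᶠ t in 𝓝 t₀, |t - t₀| ≤ δ := by
    filter_upwards [Metric.closedBall_mem_nhds t₀ hδ] with t ht using ht
  have hwc : ContinuousAt w t₀ := by
    rw [ContinuousAt, tendsto_iff_norm_sub_tendsto_zero]
    refine squeeze_zero' (Eventually.of_forall fun t => norm_nonneg _)
      (g := fun t => C * |t - t₀|) ?_ ?_
    · filter_upwards [hnear] with t ht
      rw [← hint t ht]
      exact intervalIntegral.norm_integral_le_of_norm_le_const fun s hs => hbound s (hsub t ht s hs)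
    · have : Continuous fun t => C * |t - t₀| := by fun_prop
      simpa using this.tendsto t₀
  have hw'c : ContinuousAt w' t₀ := by
    have h1 : w' = fun t => fderiv ℝ (Function.uncurry u) (t, φ t X) (0, w t) :=
      funext fun t => fderiv_uncurry_comp_inr hud _ _ _
    rw [h1]
    have h2 : Continuous fun t => fderiv ℝ (Function.uncurry u) (t, φ t X) :=
      (hu.continuous_fderiv one_ne_zero).comp (continuous_id.prodMk (hφc X))
    exact h2.continuousAt.clm_apply (continuousAt_const.prodMk hwc)
  have hderiv := intervalIntegral.integral_hasDerivAt_right (a := t₀) (b := t₀)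
    (IntervalIntegrable.refl) hmeas.stronglyMeasurableAtFilter hw'c
  refine (hderiv.add_const (w t₀)).congr_of_eventuallyEq ?_
  filter_upwards [hnear] with t ht
  rw [hint t ht, sub_add_cancel]

end Flow

/-- Liouville's formula: if `M' = A M` then `(det M)' = tr A * det M`. -/
theorem hasDerivAt_det_of_hasDerivAt_comp {M : ℝ → E3 →L[ℝ] E3} {A : E3 →L[ℝ] E3} {t : ℝ}
    (hM : ∀ h, HasDerivAt (fun τ => M τ h) (A (M t h)) t) :
    HasDerivAt (fun τ => LinearMap.det (M τ : E3 →ₗ[ℝ] E3))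
      (LinearMap.trace ℝ E3 (A : E3 →ₗ[ℝ] E3) * LinearMap.det (M t : E3 →ₗ[ℝ] E3)) t := by
  let b := (EuclideanSpace.basisFun (Fin 3) ℝ).toBasis
  let N : ℝ → Matrix (Fin 3) (Fin 3) ℝ := fun τ => LinearMap.toMatrix b b (M τ : E3 →ₗ[ℝ] E3)
  let B := LinearMap.toMatrix b b (A : E3 →ₗ[ℝ] E3)
  have hN : ∀ i j, HasDerivAt (fun τ => N τ i j) ((B * N t) i j) t := by
    intro i j
    have h1 : (B * N t) i j = (A (M t (b j))) i := by
      rw [← LinearMap.toMatrix_comp, LinearMap.toMatrix_apply]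
      simp [b]
    have h2 : (fun τ => N τ i j) = fun τ => (M τ (b j)) i := by
      funext τ
      simp [N, b, LinearMap.toMatrix_apply]
    rw [h1, h2]
    exact (EuclideanSpace.proj i : E3 →L[ℝ] ℝ).hasFDerivAt.comp_hasDerivAt t
      (hM (b j))
  have hdet : ∀ τ, LinearMap.det (M τ : E3 →ₗ[ℝ] E3) = (N τ).det := fun τ =>
    (LinearMap.det_toMatrix b _).symm
  have htr : LinearMap.trace ℝ E3 (A : E3 →ₗ[ℝ] E3) = B.trace :=
    LinearMap.trace_eq_matrix_trace ℝ b _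
  simp only [hdet, htr, Matrix.det_fin_three, Matrix.trace_fin_three]
  refine ((((((((hN 0 0).mul (hN 1 1)).mul (hN 2 2)).sub (((hN 0 0).mul (hN 1 2)).mul (hN 2 1))).sub
    (((hN 0 1).mul (hN 1 0)).mul (hN 2 2))).add (((hN 0 1).mul (hN 1 2)).mul (hN 2 0))).add
    (((hN 0 2).mul (hN 1 0)).mul (hN 2 1))).sub
    (((hN 0 2).mul (hN 1 1)).mul (hN 2 0))).congr_deriv ?_
  simp only [Matrix.mul_apply, Fin.sum_univ_three, Pi.mul_apply]
  ring

/-- The material derivative along a trajectory. -/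
theorem hasDerivAt_comp_trajectory {E : Type*} [NormedAddCommGroup E] [NormedSpace ℝ E]
    {v : ℝ → E → ℝ} (hv : Differentiable ℝ (Function.uncurry v)) {γ : ℝ → E} {γ' : E} {t : ℝ}
    (hγ : HasDerivAt γ γ' t) :
    HasDerivAt (fun τ => v τ (γ τ))
      (deriv (fun τ => v τ (γ t)) t + fderiv ℝ (v t) (γ t) γ') t := by
  have hD := (hv (t, γ t)).hasFDerivAt
  have h1 : HasDerivAt (fun τ => v τ (γ τ))
      (fderiv ℝ (Function.uncurry v) (t, γ t) (1, γ')) t :=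
    HasFDerivAt.comp_hasDerivAt (f := fun τ => (τ, γ τ)) t hD ((hasDerivAt_id t).prodMk hγ)
  have h2 : HasDerivAt (fun τ => v τ (γ t))
      (fderiv ℝ (Function.uncurry v) (t, γ t) (1, 0)) t :=
    HasFDerivAt.comp_hasDerivAt (f := fun τ => (τ, γ t)) t hD
      ((hasDerivAt_id t).prodMk (hasDerivAt_const t (γ t)))
  refine h1.congr_deriv ?_
  rw [h2.deriv, fderiv_uncurry_comp_inr hv, ← map_add]
  simp

/-- The 3-form `v · det` is moving with the fluid iff `v`
satisfies the continuity equation. -/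
theorem three_form_moving_with_fluid_iff
    (u φ : ℝ → E3 → E3)
    (F : ℝ → E3 → (E3 ≃L[ℝ] E3))
    (hu : ContDiff ℝ (⊤ : ℕ∞) (Function.uncurry u))
    (hφ0 : ∀ X, φ 0 X = X)
    (hφt : ∀ t X, HasDerivAt (fun τ => φ τ X) (u t (φ t X)) t)
    (hφsmooth : ∀ t, ContDiff ℝ (⊤ : ℕ∞) (φ t))
    (hφbij : ∀ t, Function.Bijective (φ t))
    (hφinv : ∀ t, ContDiff ℝ (⊤ : ℕ∞) (Function.invFun (φ t)))
    (hF : ∀ t X, (F t X : E3 →L[ℝ] E3) = fderiv ℝ (φ t) X)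
    (v : ℝ → E3 → ℝ)
    (hv : ContDiff ℝ 1 (Function.uncurry v)) :
    (∀ t X, v t (φ t X) * LinearMap.det ((F t X : E3 →L[ℝ] E3) : E3 →ₗ[ℝ] E3)
        = v 0 X) ↔
      (∀ t x, deriv (fun τ => v τ x) t + fderiv ℝ (v t) x (u t x)
        + v t x * divv (u t) x = 0) := by
  have hφd : ∀ t, Differentiable ℝ (φ t) := fun t => (hφsmooth t).differentiable (by simp)
  have hu1 : ContDiff ℝ 1 (Function.uncurry u) := hu.of_le (by exact_mod_cast le_top)
  have hderiv : ∀ t X, HasDerivAt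
      (fun τ => v τ (φ τ X) * LinearMap.det ((F τ X : E3 →L[ℝ] E3) : E3 →ₗ[ℝ] E3))
      ((deriv (fun τ => v τ (φ t X)) t + fderiv ℝ (v t) (φ t X) (u t (φ t X))
        + v t (φ t X) * divv (u t) (φ t X))
        * LinearMap.det ((F t X : E3 →L[ℝ] E3) : E3 →ₗ[ℝ] E3)) t := by
    intro t X
    simp only [hF]
    have hdet := hasDerivAt_det_of_hasDerivAt_comp (M := fun τ => fderiv ℝ (φ τ) X)
      (hasDerivAt_fderiv_flow hu1 hφt hφd t X)
    refine ((hasDerivAt_comp_trajectory (hv.differentiable one_ne_zero)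
      (hφt t X)).mul hdet).congr_deriv ?_
    rw [divv]
    ring
  have hdet0 : ∀ t X, LinearMap.det ((F t X : E3 →L[ℝ] E3) : E3 →ₗ[ℝ] E3) ≠ 0 := fun t X =>
    (LinearEquiv.isUnit_det' (F t X).toLinearEquiv).ne_zero
  constructor
  · intro h t x
    obtain ⟨X, rfl⟩ := (hφbij t).2 x
    have h1 := hderiv t X
    simp only [h] at h1
    exact (mul_eq_zero.1 (h1.unique (hasDerivAt_const t (v 0 X)))).resolve_right (hdet0 t X)
  · intro h t X
    have hzero : ∀ s, HasDerivAt
        (fun τ => v τ (φ τ X) * LinearMap.det ((F τ X : E3 →L[ℝ] E3) : E3 →ₗ[ℝ] E3)) 0 s := by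
      intro s
      simpa only [h, zero_mul] using hderiv s X
    have hid : φ 0 = id := funext hφ0
    refine (is_const_of_deriv_eq_zero (fun s => (hzero s).differentiableAt)
      (fun s => (hzero s).deriv) t 0).trans ?_
    simp [hF, hid]
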